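/- arXiv:1711.00142 — 6 statements merged into one kernel-verified Lean document; each statement's English description precedes it below -/
import Mathlib

section
/- For every subset S ⊆ {1,…,N} and every j ∈ {1,…,N} \ S, the marginal gain of adding node j satisfies f(S ∪ {j}) − f(S) = (u_jᵀ Σ̄_S² u_j)/(σ² + u_jᵀ Σ̄_S u_j). -/
open Matrix BigOperators

/-- The error covariance matrix `Σ̄_S = (P⁻¹ + σ⁻² ∑_{j ∈ S} u_j u_jᵀ)⁻¹`, where `u_j` is
the `j`-th row of `U`. -/
noncomputable def errCov {N k : ℕ} (σ : ℝ) (P : Matrix (Fin k) (Fin k) ℝ)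
    (U : Matrix (Fin N) (Fin k) ℝ) (S : Finset (Fin N)) : Matrix (Fin k) (Fin k) ℝ :=
  (P⁻¹ + (σ ^ 2)⁻¹ • ∑ j ∈ S, vecMulVec (U j) (U j))⁻¹

/-- The set function `f(S) = Tr(P) − Tr(Σ̄_S)`. -/
noncomputable def fMSE {N k : ℕ} (σ : ℝ) (P : Matrix (Fin k) (Fin k) ℝ)
    (U : Matrix (Fin N) (Fin k) ℝ) (S : Finset (Fin N)) : ℝ :=
  Matrix.trace P - Matrix.trace (errCov σ P U S)

/-!
Adding a sample `j` perturbs the information matrix `Σ̄_S⁻¹` by the rank-one matrix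
`σ⁻² u_j u_jᵀ`. The Sherman–Morrison formula then gives `Σ̄_S - Σ̄_{S ∪ {j}}` as a scalar multiple
of `(Σ̄_S u_j) (u_jᵀ Σ̄_S)`, whose trace is `u_jᵀ Σ̄_S² u_j`.
-/

section RankOneUpdate

variable {n K : Type*} [Fintype n] [DecidableEq n] [Field K] {A : Matrix n n K} {u v : n → K}

/-- The **Sherman–Morrison formula**. -/
theorem inv_add_vecMulVec (hA : IsUnit A) (huv : 1 + v ⬝ᵥ A⁻¹ *ᵥ u ≠ 0) :
    (A + vecMulVec u v)⁻¹ =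
      A⁻¹ - (1 + v ⬝ᵥ A⁻¹ *ᵥ u)⁻¹ • vecMulVec (A⁻¹ *ᵥ u) (v ᵥ* A⁻¹) := by
  have capacitance_eq : (1 : Matrix Unit Unit K)⁻¹ +
      replicateRow Unit v * A⁻¹ * replicateCol Unit u = (1 + v ⬝ᵥ A⁻¹ *ᵥ u) • 1 := by
    ext i j
    rw [Matrix.add_apply, ← replicateRow_vecMul, replicateRow_mul_replicateCol_apply,
      ← dotProduct_mulVec]
    simp
  have capacitance_mul_inv : ((1 + v ⬝ᵥ A⁻¹ *ᵥ u) • 1 : Matrix Unit Unit K) *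
      ((1 + v ⬝ᵥ A⁻¹ *ᵥ u)⁻¹ • 1) = 1 := by
    rw [smul_mul_smul_comm, mul_inv_cancel₀ huv, one_smul, one_mul]
  have woodbury := add_mul_mul_inv_eq_sub A (replicateCol Unit u) 1 (replicateRow Unit v) hA
    isUnit_one (capacitance_eq ▸ .of_mul_eq_one _ capacitance_mul_inv)
  rwa [capacitance_eq, inv_eq_right_inv capacitance_mul_inv, Matrix.mul_one, ← vecMulVec_eq,
    Matrix.mul_smul, Matrix.mul_one, Matrix.smul_mul, Matrix.smul_mul, Matrix.mul_assoc,
    ← replicateCol_mulVec, ← replicateRow_vecMul, ← vecMulVec_eq] at woodbury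

theorem trace_inv_sub_trace_inv_add_vecMulVec (hA : IsUnit A) (huv : 1 + v ⬝ᵥ A⁻¹ *ᵥ u ≠ 0) :
    trace A⁻¹ - trace (A + vecMulVec u v)⁻¹ =
      v ⬝ᵥ (A⁻¹ * A⁻¹) *ᵥ u / (1 + v ⬝ᵥ A⁻¹ *ᵥ u) := by
  have trace_correction :
      trace (vecMulVec (A⁻¹ *ᵥ u) (v ᵥ* A⁻¹)) = v ⬝ᵥ (A⁻¹ * A⁻¹) *ᵥ u := by
    rw [trace_vecMulVec, dotProduct_comm, ← dotProduct_mulVec, mulVec_mulVec]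
  rw [inv_add_vecMulVec hA huv, trace_sub, sub_sub_cancel, trace_smul, trace_correction,
    smul_eq_mul, inv_mul_eq_div]

end RankOneUpdate

section InformationMatrix

variable {ι n : Type*} [Fintype n] [DecidableEq n]

/-- The information (posterior precision) matrix `P⁻¹ + σ⁻² ∑_{i ∈ S} u_i u_iᵀ` of the samples in
`S`, where `u_i` is the `i`-th row of `U`. Its inverse is the error covariance matrix `Σ̄_S`. -/
noncomputable def infoMatrix (σ : ℝ) (P : Matrix n n ℝ) (U : Matrix ι n ℝ) (S : Finset ι) :
    Matrix n n ℝ :=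
  P⁻¹ + (σ ^ 2)⁻¹ • ∑ i ∈ S, vecMulVec (U i) (U i)

theorem infoMatrix_insert [DecidableEq ι] (σ : ℝ) (P : Matrix n n ℝ) (U : Matrix ι n ℝ)
    {S : Finset ι} {j : ι} (hj : j ∉ S) :
    infoMatrix σ P U (insert j S) =
      infoMatrix σ P U S + vecMulVec ((σ ^ 2)⁻¹ • U j) (U j) := by
  rw [infoMatrix, infoMatrix, Finset.sum_insert hj, smul_add, smul_vecMulVec, add_assoc,
    add_comm (_ • vecMulVec _ _)]

theorem posDef_infoMatrix (σ : ℝ) {P : Matrix n n ℝ} (hP : P.PosDef) (U : Matrix ι n ℝ)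
    (S : Finset ι) : (infoMatrix σ P U S).PosDef :=
  hP.inv.add_posSemidef <| (posSemidef_sum S fun i _ ↦ posSemidef_vecMulVec_self_star (U i)).smul
    (inv_nonneg.mpr (sq_nonneg σ))

end InformationMatrix

section MarginalGain

variable {N k : ℕ}

theorem errCov_eq_inv_infoMatrix (σ : ℝ) (P : Matrix (Fin k) (Fin k) ℝ)
    (U : Matrix (Fin N) (Fin k) ℝ) (S : Finset (Fin N)) :
    errCov σ P U S = (infoMatrix σ P U S)⁻¹ :=
  rfl

theorem dotProduct_errCov_mulVec_nonneg (σ : ℝ) {P : Matrix (Fin k) (Fin k) ℝ} (hP : P.PosDef)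
    (U : Matrix (Fin N) (Fin k) ℝ) (S : Finset (Fin N)) (x : Fin k → ℝ) :
    0 ≤ x ⬝ᵥ errCov σ P U S *ᵥ x :=
  (posDef_infoMatrix σ hP U S).inv.posSemidef.dotProduct_mulVec_nonneg x

theorem marginal_gain_eq_general {σ : ℝ} (hσ : σ ≠ 0) {P : Matrix (Fin k) (Fin k) ℝ}
    (hP : P.PosDef) (U : Matrix (Fin N) (Fin k) ℝ) {S : Finset (Fin N)} {j : Fin N} (hj : j ∉ S) :
    fMSE σ P U (insert j S) - fMSE σ P U S =
      U j ⬝ᵥ ((errCov σ P U S * errCov σ P U S) *ᵥ U j) /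
        (σ ^ 2 + U j ⬝ᵥ (errCov σ P U S *ᵥ U j)) := by
  have hquad := dotProduct_errCov_mulVec_nonneg σ hP U S (U j)
  have hdenom : 1 + U j ⬝ᵥ errCov σ P U S *ᵥ ((σ ^ 2)⁻¹ • U j) ≠ 0 := by
    rw [mulVec_smul, dotProduct_smul, smul_eq_mul]
    positivity
  calc fMSE σ P U (insert j S) - fMSE σ P U S
      = trace (errCov σ P U S) - trace (errCov σ P U (insert j S)) := sub_sub_sub_cancel_left ..
    _ = U j ⬝ᵥ (errCov σ P U S * errCov σ P U S) *ᵥ ((σ ^ 2)⁻¹ • U j) /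
          (1 + U j ⬝ᵥ errCov σ P U S *ᵥ ((σ ^ 2)⁻¹ • U j)) := by
        rw [errCov_eq_inv_infoMatrix σ P U (insert j S), infoMatrix_insert σ P U hj]
        exact trace_inv_sub_trace_inv_add_vecMulVec (posDef_infoMatrix σ hP U S).isUnit hdenom
    _ = _ := by
        simp only [mulVec_smul, dotProduct_smul, smul_eq_mul]
        field_simp

end MarginalGain

/-- For every subset `S ⊆ {1,…,N}` and every `j ∉ S`, the marginal gain of adding node `j`
satisfies `f(S ∪ {j}) − f(S) = (u_jᵀ Σ̄_S² u_j)/(σ² + u_jᵀ Σ̄_S u_j)`. -/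
theorem marginal_gain_eq {N k : ℕ} (hN : 0 < N) (hk : 0 < k) (hkN : k ≤ N)
    (σ : ℝ) (hσ : 0 < σ)
    (P : Matrix (Fin k) (Fin k) ℝ) (hP : P.PosDef)
    (U : Matrix (Fin N) (Fin k) ℝ) (S : Finset (Fin N)) (j : Fin N) (hj : j ∉ S) :
    fMSE σ P U (insert j S) - fMSE σ P U S =
      U j ⬝ᵥ ((errCov σ P U S * errCov σ P U S) *ᵥ U j) /
        (σ ^ 2 + U j ⬝ᵥ (errCov σ P U S *ᵥ U j)) :=
  marginal_gain_eq_general hσ.ne' hP U hj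
end

section
/- The set function f(S) = Tr(P) − Tr(Σ̄_S) satisfies f(∅) = 0 and is monotonically nondecreasing: for all subsets S ⊆ T ⊆ {1,…,N}, f(S) ≤ f(T); in particular f(S) ≥ 0 for every S. -/
open Matrix BigOperators

/-!
Matrix inversion is antitone for the Loewner order: the block matrix with rows `(B, 1)` and
`(1, A⁻¹)` has Schur complements `A⁻¹ - B⁻¹` and `B - A`, so one is positive semidefinite exactly
when the other is. Each additional sample adds a positive semidefinite term to the inverse of the
error covariance, hence shrinks the error covariance itself, and with it the trace.
-/

section PosteriorCovariance

variable {ι n K : Type*} [Fintype n] [DecidableEq n] [Field K]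

/-- The error covariance obtained from a prior covariance `P` after independent observations
indexed by `S`, where observation `j` contributes the information (inverse covariance) matrix
`W j`. A linear measurement `u_j` with noise variance `σ²` has `W j = σ⁻² u_j u_jᵀ`. -/
noncomputable def posteriorCov (P : Matrix n n K) (W : ι → Matrix n n K) (S : Finset ι) :
    Matrix n n K :=
  (P⁻¹ + ∑ j ∈ S, W j)⁻¹

variable [PartialOrder K] [StarRing K]

theorem posteriorCov_empty {P : Matrix n n K} (hP : P.PosDef) (W : ι → Matrix n n K) :
    posteriorCov P W ∅ = P := by
  have isUnit_det : IsUnit P.det := P.isUnit_iff_isUnit_det.mp hP.isUnit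
  rw [posteriorCov, Finset.sum_empty, add_zero, nonsing_inv_nonsing_inv P isUnit_det]

variable [StarOrderedRing K]

theorem posSemidef_inv_sub_inv_iff {A B : Matrix n n K} (hA : A.PosDef) (hB : B.PosDef) :
    (A⁻¹ - B⁻¹).PosSemidef ↔ (B - A).PosSemidef := by
  let := hA.isUnit.invertible
  let := hB.isUnit.invertible
  calc (A⁻¹ - B⁻¹).PosSemidef
      ↔ (fromBlocks B 1 1ᴴ A⁻¹).PosSemidef := by
        simpa using (PosDef.fromBlocks₁₁ 1 A⁻¹ hB).symm
    _ ↔ (B - A).PosSemidef := by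
        simpa using PosDef.fromBlocks₂₂ B 1 hA.inv

theorem trace_inv_add_le {A D : Matrix n n K} (hA : A.PosDef) (hD : D.PosSemidef) :
    (A + D)⁻¹.trace ≤ A⁻¹.trace := by
  have inv_sub_inv_posSemidef : (A⁻¹ - (A + D)⁻¹).PosSemidef :=
    (posSemidef_inv_sub_inv_iff hA (hA.add_posSemidef hD)).mpr (by rwa [add_sub_cancel_left])
  rw [← sub_nonneg, ← trace_sub]
  exact inv_sub_inv_posSemidef.trace_nonneg

theorem antitone_trace_posteriorCov {P : Matrix n n K} {W : ι → Matrix n n K} (hP : P.PosDef)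
    (hW : ∀ j, (W j).PosSemidef) : Antitone fun S ↦ (posteriorCov P W S).trace := by
  classical
  intro S T hST
  have information_posSemidef (R : Finset ι) : (∑ j ∈ R, W j).PosSemidef :=
    posSemidef_sum R fun j _ ↦ hW j
  calc (posteriorCov P W T).trace
      = ((P⁻¹ + ∑ j ∈ S, W j) + ∑ j ∈ T \ S, W j)⁻¹.trace := by
        rw [posteriorCov, add_assoc, add_comm (∑ j ∈ S, W j), Finset.sum_sdiff hST]
    _ ≤ (posteriorCov P W S).trace :=
        trace_inv_add_le (hP.inv.add_posSemidef (information_posSemidef S))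
          (information_posSemidef (T \ S))

theorem fMSE_monotone_general {P : Matrix n n K} {W : ι → Matrix n n K} (hP : P.PosDef)
    (hW : ∀ j, (W j).PosSemidef) :
    P.trace - (posteriorCov P W ∅).trace = 0 ∧
    (∀ S T : Finset ι, S ⊆ T →
      P.trace - (posteriorCov P W S).trace ≤ P.trace - (posteriorCov P W T).trace) ∧
    (∀ S : Finset ι, 0 ≤ P.trace - (posteriorCov P W S).trace) := by
  have reduction_empty : P.trace - (posteriorCov P W ∅).trace = 0 := by
    rw [posteriorCov_empty hP, sub_self]
  have reduction_mono (S T : Finset ι) (hST : S ⊆ T) :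
      P.trace - (posteriorCov P W S).trace ≤ P.trace - (posteriorCov P W T).trace :=
    sub_le_sub_left (antitone_trace_posteriorCov hP hW hST) P.trace
  exact ⟨reduction_empty, reduction_mono,
    fun S ↦ reduction_empty.ge.trans (reduction_mono ∅ S S.empty_subset)⟩

end PosteriorCovariance

theorem errCov_eq_posteriorCov {N k : ℕ} (σ : ℝ) (P : Matrix (Fin k) (Fin k) ℝ)
    (U : Matrix (Fin N) (Fin k) ℝ) (S : Finset (Fin N)) :
    errCov σ P U S = posteriorCov P (fun j ↦ (σ ^ 2)⁻¹ • vecMulVec (U j) (U j)) S := by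
  rw [errCov, posteriorCov, Finset.smul_sum]

theorem posSemidef_smul_vecMulVec_self {n : Type*} [Finite n] {c : ℝ} (hc : 0 ≤ c) (u : n → ℝ) :
    (c • vecMulVec u u).PosSemidef :=
  (posSemidef_vecMulVec_self_star u).smul hc

/-- The set function `f(S) = Tr(P) − Tr(Σ̄_S)` satisfies `f(∅) = 0` and is monotonically
nondecreasing: for all subsets `S ⊆ T ⊆ {1,…,N}`, `f(S) ≤ f(T)`; in particular `f(S) ≥ 0`
for every `S`. -/
theorem fMSE_monotone {N k : ℕ} (hN : 0 < N) (hk : 0 < k) (hkN : k ≤ N)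
    (σ : ℝ) (hσ : 0 < σ)
    (P : Matrix (Fin k) (Fin k) ℝ) (hP : P.PosDef)
    (U : Matrix (Fin N) (Fin k) ℝ) :
    fMSE σ P U ∅ = 0 ∧
    (∀ S T : Finset (Fin N), S ⊆ T → fMSE σ P U S ≤ fMSE σ P U T) ∧
    (∀ S : Finset (Fin N), 0 ≤ fMSE σ P U S) := by
  simpa only [fMSE, errCov_eq_posteriorCov] using fMSE_monotone_general hP fun j ↦
    posSemidef_smul_vecMulVec_self (inv_nonneg.mpr (sq_nonneg σ)) (U j)
end

section
/- Assume UᵀU = I_k. Then the maximum element-wise curvature of f is bounded as follows: for all subsets S ⊆ T ⊆ {1,…,N} and every j ∈ {1,…,N} \ T, f(T ∪ {j}) − f(T) ≤ κ · (f(S ∪ {j}) − f(S)), where κ = (λ_max(P)²/λ_min(P)²) · (1 + λ_max(P)/σ²)³. -/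
open Matrix BigOperators

/-!
By the Sherman–Morrison formula, adding a sample `u` to a set with error covariance `M` improves `f`
by `c ‖M u‖² / (1 + c uᵀ M u)`, where `c = σ⁻²`. All covariances that can occur are pinched between
the same two scalar matrices: writing `l` and `L` for the extreme eigenvalues of `P`, the precision
`M⁻¹` lies between `P⁻¹ ≥ L⁻¹` and `P⁻¹ + c UᵀU ≤ l⁻¹ + c`, so `(l⁻¹ + c)⁻¹ ≤ M ≤ L`. As `‖u‖ ≤ 1`,
every improvement lies between `c (l⁻¹ + c)⁻² ‖u‖² / (1 + c L)` and `c L² ‖u‖²`, and the ratio of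
these two numbers is `(L / l)² (1 + c l)² (1 + c L) ≤ (L / l)² (1 + c L)³`.
-/

open scoped MatrixOrder

section ScalarBounds

open scoped ComplexOrder

variable {𝕜 n : Type*} [RCLike 𝕜] {A B : Matrix n n 𝕜} {r : ℝ}

lemma posDef_of_posDef_of_le (hA : A.PosDef) (hAB : A ≤ B) : B.PosDef := by
  have h := hA.add_posSemidef (le_iff.1 hAB)
  rwa [add_sub_cancel] at h

variable [DecidableEq n]

lemma posDef_of_smul_one_le (hr : 0 < r) (h : r • 1 ≤ A) : A.PosDef :=
  posDef_of_posDef_of_le (PosDef.one.smul hr) h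

variable [Fintype n]

lemma iInf_eigenvalues_smul_one_le (hA : A.IsHermitian) : (⨅ i, hA.eigenvalues i) • 1 ≤ A := by
  rw [← Algebra.algebraMap_eq_smul_one, algebraMap_le_iff_le_spectrum hA,
    hA.spectrum_real_eq_range_eigenvalues, Set.forall_mem_range]
  exact ciInf_le (Set.finite_range _).bddBelow

lemma iInf_eigenvalues_pos [Nonempty n] (hA : A.PosDef) : 0 < ⨅ i, hA.1.eigenvalues i := by
  obtain ⟨i, hi⟩ := exists_eq_ciInf_of_finite (f := hA.1.eigenvalues)
  exact hi ▸ hA.eigenvalues_pos i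

lemma le_iSup_eigenvalues_smul_one (hA : A.IsHermitian) : A ≤ (⨆ i, hA.eigenvalues i) • 1 := by
  rw [← Algebra.algebraMap_eq_smul_one, le_algebraMap_iff_spectrum_le hA,
    hA.spectrum_real_eq_range_eigenvalues, Set.forall_mem_range]
  exact le_ciSup (Set.finite_range _).bddAbove

lemma cfc_inv_eq_inv (hA : A.PosDef) : cfc (fun x : ℝ ↦ x⁻¹) A = A⁻¹ := by
  obtain ⟨a, rfl⟩ := hA.isUnit
  rw [cfc_inv_id a hA.isHermitian.isSelfAdjoint, coe_units_inv]

lemma inv_le_inv_smul_one (hr : 0 < r) (h : r • 1 ≤ A) : A⁻¹ ≤ r⁻¹ • 1 := by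
  have hA := posDef_of_smul_one_le hr h
  rw [← Algebra.algebraMap_eq_smul_one] at h ⊢
  rw [← cfc_inv_eq_inv hA]
  refine cfc_le_algebraMap _ _ _ (fun x hx ↦ ?_) (A.finite_real_spectrum.continuousOn _)
    hA.isHermitian.isSelfAdjoint
  exact inv_anti₀ hr ((algebraMap_le_iff_le_spectrum hA.isHermitian).1 h x hx)

lemma inv_smul_one_le_inv (hA : A.PosDef) (h : A ≤ r • 1) : r⁻¹ • 1 ≤ A⁻¹ := by
  rw [← Algebra.algebraMap_eq_smul_one] at h ⊢
  rw [← cfc_inv_eq_inv hA]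
  refine algebraMap_le_cfc _ _ _ (fun x hx ↦ ?_) (A.finite_real_spectrum.continuousOn _)
    hA.isHermitian.isSelfAdjoint
  have hx_pos : 0 < x := hA.isStrictlyPositive.spectrum_pos hx
  exact inv_anti₀ hx_pos ((le_algebraMap_iff_spectrum_le hA.isHermitian).1 h x hx)

lemma sq_smul_one_le_sq (hr : 0 ≤ r) (h : r • 1 ≤ A) : r ^ 2 • 1 ≤ A ^ 2 := by
  have hA : IsSelfAdjoint A := .of_nonneg ((smul_nonneg hr zero_le_one).trans h)
  rw [← Algebra.algebraMap_eq_smul_one] at h ⊢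
  rw [← cfc_pow_id (R := ℝ) A 2]
  refine algebraMap_le_cfc _ _ _ fun x hx ↦ ?_
  exact pow_le_pow_left₀ hr ((algebraMap_le_iff_le_spectrum hA).1 h x hx) 2

lemma sq_le_sq_smul_one (hA : 0 ≤ A) (h : A ≤ r • 1) : A ^ 2 ≤ r ^ 2 • 1 := by
  rw [← Algebra.algebraMap_eq_smul_one] at h ⊢
  rw [← cfc_pow_id (R := ℝ) A 2]
  refine cfc_le_algebraMap _ _ _ fun x hx ↦ ?_
  exact pow_le_pow_left₀ (spectrum_nonneg_of_nonneg hA hx)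
    ((le_algebraMap_iff_spectrum_le (IsSelfAdjoint.of_nonneg hA)).1 h x hx) 2

end ScalarBounds

section LoewnerOrder

variable {ι n : Type*}

lemma vecMulVec_self_nonneg [Finite n] (u : n → ℝ) : 0 ≤ vecMulVec u u := by
  simpa only [star_trivial] using (posSemidef_vecMulVec_self_star u).nonneg

lemma transpose_mul_eq_sum_vecMulVec {m R : Type*} [NonUnitalNonAssocSemiring R] [Fintype ι]
    (U : Matrix ι m R) (V : Matrix ι n R) : Uᵀ * V = ∑ i, vecMulVec (U i) (V i) := by
  ext a b
  simp only [mul_apply, transpose_apply, Matrix.sum_apply, vecMulVec_apply]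

lemma sum_vecMulVec_le_transpose_mul_self [Fintype ι] [Finite n] (U : Matrix ι n ℝ)
    (S : Finset ι) :
    ∑ i ∈ S, vecMulVec (U i) (U i) ≤ Uᵀ * U := by
  rw [transpose_mul_eq_sum_vecMulVec]
  exact Finset.sum_le_univ_sum_of_nonneg fun i ↦ vecMulVec_self_nonneg (U i)

variable [Fintype n]

lemma dotProduct_mulVec_mono {A B : Matrix n n ℝ} (hAB : A ≤ B) (u : n → ℝ) :
    u ⬝ᵥ A *ᵥ u ≤ u ⬝ᵥ B *ᵥ u := by
  have h := (le_iff.1 hAB).dotProduct_mulVec_nonneg u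
  rwa [star_trivial, sub_mulVec, dotProduct_sub, sub_nonneg] at h

variable [DecidableEq n]

lemma dotProduct_smul_one_mulVec (r : ℝ) (u : n → ℝ) :
    u ⬝ᵥ (r • (1 : Matrix n n ℝ)) *ᵥ u = r * (u ⬝ᵥ u) := by
  rw [smul_mulVec, one_mulVec, dotProduct_smul, smul_eq_mul]

lemma dotProduct_self_le_one_of_vecMulVec_le_one {u : n → ℝ} (hu : vecMulVec u u ≤ 1) :
    u ⬝ᵥ u ≤ 1 := by
  have hsq : (u ⬝ᵥ u) * (u ⬝ᵥ u) ≤ u ⬝ᵥ u := by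
    simpa [vecMulVec_mulVec] using dotProduct_mulVec_mono hu u
  nlinarith

end LoewnerOrder

section RankOneUpdate

variable {K n : Type*} [Field K] [Fintype n] [DecidableEq n] {A : Matrix n n K}

lemma inv_add_smul_vecMulVec (hA : IsUnit A) (c : K) (u v : n → K)
    (h : 1 + c * (v ⬝ᵥ A⁻¹ *ᵥ u) ≠ 0) :
    (A + c • vecMulVec u v)⁻¹ =
      A⁻¹ - (c / (1 + c * (v ⬝ᵥ A⁻¹ *ᵥ u))) • vecMulVec (A⁻¹ *ᵥ u) (v ᵥ* A⁻¹) := by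
  have hdet := (isUnit_iff_isUnit_det A).1 hA
  apply inv_eq_right_inv
  rw [mul_sub, add_mul, add_mul, mul_nonsing_inv _ hdet, smul_mul_assoc, mul_smul_comm,
    mul_smul_comm, smul_mul_assoc, vecMulVec_mul, mul_vecMulVec, mulVec_mulVec,
    mul_nonsing_inv _ hdet, one_mulVec, vecMulVec_mul_vecMulVec, vecMulVec_smul]
  match_scalars
  · rfl
  · field_simp
    ring

lemma trace_inv_sub_trace_inv_add_smul_vecMulVec (hA : IsUnit A) (c : K) (u v : n → K)
    (h : 1 + c * (v ⬝ᵥ A⁻¹ *ᵥ u) ≠ 0) :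
    trace A⁻¹ - trace (A + c • vecMulVec u v)⁻¹ =
      c * (v ⬝ᵥ A⁻¹ ^ 2 *ᵥ u) / (1 + c * (v ⬝ᵥ A⁻¹ *ᵥ u)) := by
  rw [inv_add_smul_vecMulVec hA c u v h, trace_sub, trace_smul, trace_vecMulVec, sub_sub_cancel,
    smul_eq_mul, dotProduct_comm (_ *ᵥ _), ← dotProduct_mulVec, mulVec_mulVec, ← sq,
    div_mul_eq_mul_div]

end RankOneUpdate

section RealRankOneUpdate

variable {n : Type*} [Fintype n] [DecidableEq n] {A : Matrix n n ℝ} {a b c : ℝ}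

lemma trace_inv_sub_trace_inv_add_smul_vecMulVec_self (hA : A.PosDef) (hc : 0 ≤ c) (u : n → ℝ) :
    trace A⁻¹ - trace (A + c • vecMulVec u u)⁻¹ =
      c * (u ⬝ᵥ A⁻¹ ^ 2 *ᵥ u) / (1 + c * (u ⬝ᵥ A⁻¹ *ᵥ u)) := by
  have hquad : 0 ≤ u ⬝ᵥ A⁻¹ *ᵥ u := hA.inv.posSemidef.dotProduct_mulVec_nonneg u
  exact trace_inv_sub_trace_inv_add_smul_vecMulVec hA.isUnit c u u (by positivity)

lemma trace_inv_sub_trace_inv_add_smul_vecMulVec_self_nonneg (hA : A.PosDef) (hc : 0 ≤ c)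
    (u : n → ℝ) : 0 ≤ trace A⁻¹ - trace (A + c • vecMulVec u u)⁻¹ := by
  have hquad : 0 ≤ u ⬝ᵥ A⁻¹ *ᵥ u := hA.inv.posSemidef.dotProduct_mulVec_nonneg u
  have hsq : 0 ≤ u ⬝ᵥ A⁻¹ ^ 2 *ᵥ u := (hA.inv.posSemidef.pow 2).dotProduct_mulVec_nonneg u
  rw [trace_inv_sub_trace_inv_add_smul_vecMulVec_self hA hc]
  positivity

lemma trace_inv_sub_trace_inv_add_smul_vecMulVec_self_le (hA : A.PosDef) (hc : 0 ≤ c)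
    (hb : A⁻¹ ≤ b • 1) (u : n → ℝ) :
    trace A⁻¹ - trace (A + c • vecMulVec u u)⁻¹ ≤ c * (b ^ 2 * (u ⬝ᵥ u)) := by
  have hquad : 0 ≤ u ⬝ᵥ A⁻¹ *ᵥ u := hA.inv.posSemidef.dotProduct_mulVec_nonneg u
  have hsq : 0 ≤ u ⬝ᵥ A⁻¹ ^ 2 *ᵥ u := (hA.inv.posSemidef.pow 2).dotProduct_mulVec_nonneg u
  have hsq_le := dotProduct_mulVec_mono (sq_le_sq_smul_one hA.inv.posSemidef.nonneg hb) u
  rw [dotProduct_smul_one_mulVec] at hsq_le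
  rw [trace_inv_sub_trace_inv_add_smul_vecMulVec_self hA hc]
  calc c * (u ⬝ᵥ A⁻¹ ^ 2 *ᵥ u) / (1 + c * (u ⬝ᵥ A⁻¹ *ᵥ u))
      ≤ c * (u ⬝ᵥ A⁻¹ ^ 2 *ᵥ u) :=
        div_le_self (by positivity) (le_add_of_nonneg_right (by positivity))
    _ ≤ c * (b ^ 2 * (u ⬝ᵥ u)) := by gcongr

lemma le_trace_inv_sub_trace_inv_add_smul_vecMulVec_self (hA : A.PosDef) (hc : 0 ≤ c)
    (ha₀ : 0 ≤ a) (ha : a • 1 ≤ A⁻¹) (hb : A⁻¹ ≤ b • 1) (u : n → ℝ) :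
    c * (a ^ 2 * (u ⬝ᵥ u)) / (1 + c * (b * (u ⬝ᵥ u))) ≤
      trace A⁻¹ - trace (A + c • vecMulVec u u)⁻¹ := by
  have hquad : 0 ≤ u ⬝ᵥ A⁻¹ *ᵥ u := hA.inv.posSemidef.dotProduct_mulVec_nonneg u
  have hsq : 0 ≤ u ⬝ᵥ A⁻¹ ^ 2 *ᵥ u := (hA.inv.posSemidef.pow 2).dotProduct_mulVec_nonneg u
  have hquad_le := dotProduct_mulVec_mono hb u
  have hle_sq := dotProduct_mulVec_mono (sq_smul_one_le_sq ha₀ ha) u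
  rw [dotProduct_smul_one_mulVec] at hquad_le hle_sq
  rw [trace_inv_sub_trace_inv_add_smul_vecMulVec_self hA hc]
  gcongr

end RealRankOneUpdate

/-- The precision matrix `P⁻¹ + c ∑_{i ∈ S} uᵢ uᵢᵀ` of the samples in `S`, where `uᵢ` is the `i`-th
row of `U` and `c` is the inverse noise variance; its inverse is the error covariance `Σ̄_S`. -/
noncomputable def precisionMatrix {ι n : Type*} [Fintype n] [DecidableEq n] (c : ℝ)
    (P : Matrix n n ℝ) (U : Matrix ι n ℝ) (S : Finset ι) : Matrix n n ℝ :=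
  P⁻¹ + c • ∑ i ∈ S, vecMulVec (U i) (U i)

/-- The marginal gain `f(S ∪ {j}) - f(S)`, written as the amount by which the sample `j` reduces the
trace of the error covariance. -/
noncomputable def marginalGain {ι n : Type*} [DecidableEq ι] [Fintype n] [DecidableEq n] (c : ℝ)
    (P : Matrix n n ℝ) (U : Matrix ι n ℝ) (S : Finset ι) (j : ι) : ℝ :=
  trace (precisionMatrix c P U S)⁻¹ - trace (precisionMatrix c P U (insert j S))⁻¹

section MarginalGain

variable {ι n : Type*} [Fintype n] [DecidableEq n]
  {c l L : ℝ} {P : Matrix n n ℝ} {U : Matrix ι n ℝ} {S : Finset ι} {j : ι}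

lemma inv_le_precisionMatrix (hc : 0 ≤ c) : P⁻¹ ≤ precisionMatrix c P U S :=
  le_add_of_nonneg_right <|
    smul_nonneg hc <| Finset.sum_nonneg fun i _ ↦ vecMulVec_self_nonneg (U i)

lemma precisionMatrix_posDef (hP : P.PosDef) (hc : 0 ≤ c) : (precisionMatrix c P U S).PosDef :=
  posDef_of_posDef_of_le hP.inv (inv_le_precisionMatrix hc)

lemma precisionMatrix_inv_le_smul_one (hP : P.PosDef) (hc : 0 ≤ c) (hL : 0 < L)
    (hPL : P ≤ L • 1) : (precisionMatrix c P U S)⁻¹ ≤ L • 1 := by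
  have h : L⁻¹ • 1 ≤ precisionMatrix c P U S :=
    (inv_smul_one_le_inv hP hPL).trans (inv_le_precisionMatrix hc)
  simpa only [inv_inv] using inv_le_inv_smul_one (inv_pos.2 hL) h

lemma smul_one_le_precisionMatrix_inv [Fintype ι] (hc : 0 ≤ c) (hl : 0 < l) (hlP : l • 1 ≤ P)
    (hU : Uᵀ * U ≤ 1) : (l⁻¹ + c)⁻¹ • 1 ≤ (precisionMatrix c P U S)⁻¹ := by
  refine inv_smul_one_le_inv (precisionMatrix_posDef (posDef_of_smul_one_le hl hlP) hc) ?_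
  rw [add_smul]
  exact add_le_add (inv_le_inv_smul_one hl hlP)
    (smul_le_smul_of_nonneg_left ((sum_vecMulVec_le_transpose_mul_self U S).trans hU) hc)

variable [DecidableEq ι]

lemma precisionMatrix_insert (hj : j ∉ S) : precisionMatrix c P U (insert j S) =
    precisionMatrix c P U S + c • vecMulVec (U j) (U j) := by
  rw [precisionMatrix, precisionMatrix, Finset.sum_insert hj, smul_add,
    add_comm (c • vecMulVec _ _), add_assoc]

lemma marginalGain_nonneg (hP : P.PosDef) (hc : 0 ≤ c) : 0 ≤ marginalGain c P U S j := by
  by_cases hj : j ∈ S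
  · rw [marginalGain, Finset.insert_eq_of_mem hj, sub_self]
  · rw [marginalGain, precisionMatrix_insert hj]
    exact trace_inv_sub_trace_inv_add_smul_vecMulVec_self_nonneg (precisionMatrix_posDef hP hc) hc
      (U j)

lemma marginalGain_le (hP : P.PosDef) (hc : 0 ≤ c) (hL : 0 < L) (hPL : P ≤ L • 1) :
    marginalGain c P U S j ≤ c * (L ^ 2 * (U j ⬝ᵥ U j)) := by
  by_cases hj : j ∈ S
  · have hsq : 0 ≤ U j ⬝ᵥ U j := dotProduct_star_self_nonneg (U j)
    rw [marginalGain, Finset.insert_eq_of_mem hj, sub_self]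
    positivity
  · rw [marginalGain, precisionMatrix_insert hj]
    exact trace_inv_sub_trace_inv_add_smul_vecMulVec_self_le (precisionMatrix_posDef hP hc) hc
      (precisionMatrix_inv_le_smul_one hP hc hL hPL) (U j)

lemma le_marginalGain [Fintype ι] (hc : 0 ≤ c) (hl : 0 < l) (hlP : l • 1 ≤ P) (hL : 0 < L)
    (hPL : P ≤ L • 1) (hU : Uᵀ * U ≤ 1) (hj : j ∉ S) :
    c * ((l⁻¹ + c)⁻¹ ^ 2 * (U j ⬝ᵥ U j)) / (1 + c * (L * (U j ⬝ᵥ U j))) ≤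
      marginalGain c P U S j := by
  have hP := posDef_of_smul_one_le hl hlP
  rw [marginalGain, precisionMatrix_insert hj]
  exact le_trace_inv_sub_trace_inv_add_smul_vecMulVec_self (precisionMatrix_posDef hP hc) hc
    (by positivity) (smul_one_le_precisionMatrix_inv hc hl hlP hU)
    (precisionMatrix_inv_le_smul_one hP hc hL hPL) (U j)

theorem marginalGain_le_mul_marginalGain [Fintype ι] (hc : 0 ≤ c) (hl : 0 < l) (hlP : l • 1 ≤ P)
    (hL : 0 < L) (hPL : P ≤ L • 1) (hU : Uᵀ * U ≤ 1) (hj : j ∉ S) (T : Finset ι) :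
    marginalGain c P U T j ≤
      L ^ 2 / l ^ 2 * ((1 + l * c) ^ 2 * (1 + L * c)) * marginalGain c P U S j := by
  have hu₀ : 0 ≤ U j ⬝ᵥ U j := dotProduct_star_self_nonneg (U j)
  have hu₁ : U j ⬝ᵥ U j ≤ 1 := by
    have h := (sum_vecMulVec_le_transpose_mul_self U {j}).trans hU
    rw [Finset.sum_singleton] at h
    exact dotProduct_self_le_one_of_vecMulVec_le_one h
  calc marginalGain c P U T j
      ≤ c * (L ^ 2 * (U j ⬝ᵥ U j)) :=
        marginalGain_le (posDef_of_smul_one_le hl hlP) hc hL hPL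
    _ = L ^ 2 / l ^ 2 * ((1 + l * c) ^ 2 * (1 + L * c)) *
          (c * ((l⁻¹ + c)⁻¹ ^ 2 * (U j ⬝ᵥ U j)) / (1 + c * (L * 1))) := by
        field_simp
    _ ≤ L ^ 2 / l ^ 2 * ((1 + l * c) ^ 2 * (1 + L * c)) *
          (c * ((l⁻¹ + c)⁻¹ ^ 2 * (U j ⬝ᵥ U j)) / (1 + c * (L * (U j ⬝ᵥ U j)))) := by
        gcongr
    _ ≤ _ := by
        gcongr
        exact le_marginalGain hc hl hlP hL hPL hU hj

theorem curvature_bound_general [Fintype ι] [Nonempty n] (hc : 0 ≤ c) (hP : P.PosDef)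
    (hU : Uᵀ * U ≤ 1) (hj : j ∉ S) (T : Finset ι) :
    marginalGain c P U T j ≤
      (⨆ i, hP.1.eigenvalues i) ^ 2 / (⨅ i, hP.1.eigenvalues i) ^ 2 *
        (1 + (⨆ i, hP.1.eigenvalues i) * c) ^ 3 * marginalGain c P U S j := by
  have hl := iInf_eigenvalues_pos hP
  have hlL : ⨅ i, hP.1.eigenvalues i ≤ ⨆ i, hP.1.eigenvalues i :=
    ciInf_le_ciSup (Set.finite_range _).bddBelow (Set.finite_range _).bddAbove
  have hL := hl.trans_le hlL
  have hgain := marginalGain_nonneg (U := U) (S := S) (j := j) hP hc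
  refine (marginalGain_le_mul_marginalGain hc hl (iInf_eigenvalues_smul_one_le hP.1) hL
    (le_iSup_eigenvalues_smul_one hP.1) hU hj T).trans ?_
  rw [pow_succ (1 + _) 2]
  gcongr

end MarginalGain

lemma fMSE_insert_sub_fMSE {N k : ℕ} (σ : ℝ) (P : Matrix (Fin k) (Fin k) ℝ)
    (U : Matrix (Fin N) (Fin k) ℝ) (S : Finset (Fin N)) (j : Fin N) :
    fMSE σ P U (insert j S) - fMSE σ P U S = marginalGain (σ ^ 2)⁻¹ P U S j :=
  sub_sub_sub_cancel_left _ _ _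

/-- Assume `UᵀU = I_k`. Then the maximum element-wise curvature of `f` is bounded: for all
subsets `S ⊆ T ⊆ {1,…,N}` and every `j ∉ T`,
`f(T ∪ {j}) − f(T) ≤ κ · (f(S ∪ {j}) − f(S))`, where
`κ = (λ_max(P)²/λ_min(P)²)·(1 + λ_max(P)/σ²)³`. -/
theorem curvature_bound {N k : ℕ} (hN : 0 < N) (hk : 0 < k) (hkN : k ≤ N)
    (σ : ℝ) (hσ : 0 < σ)
    (P : Matrix (Fin k) (Fin k) ℝ) (hP : P.PosDef)
    (U : Matrix (Fin N) (Fin k) ℝ)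
    (hU : Uᵀ * U = (1 : Matrix (Fin k) (Fin k) ℝ))
    (S T : Finset (Fin N)) (hST : S ⊆ T) (j : Fin N) (hj : j ∉ T) :
    fMSE σ P U (insert j T) - fMSE σ P U T ≤
      (⨆ i, hP.1.eigenvalues i) ^ 2 / (⨅ i, hP.1.eigenvalues i) ^ 2 *
        (1 + (⨆ i, hP.1.eigenvalues i) / σ ^ 2) ^ 3 *
        (fMSE σ P U (insert j S) - fMSE σ P U S) := by
  have : Nonempty (Fin k) := ⟨⟨0, hk⟩⟩
  rw [fMSE_insert_sub_fMSE, fMSE_insert_sub_fMSE, div_eq_mul_inv _ (σ ^ 2)]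
  exact curvature_bound_general (by positivity) hP hU.le (fun hjS ↦ hj (hST hjS)) T
end

section
/- For every pair of subsets S, O ⊆ X, f(S ∪ O) − f(S) ≤ c · ∑_{j ∈ O \ S} (f(S ∪ {j}) − f(S)). -/
open Finset BigOperators

section MarginalGain

variable {X M : Type*} [DecidableEq X] [AddCommGroup M] [PartialOrder M] [IsOrderedAddMonoid M]

theorem union_sub_le_sum_of_marginal_le {f : Finset X → M} {S : Finset X} {g : X → M}
    (hg : ∀ T : Finset X, ∀ j : X, S ⊆ T → j ∉ T → f (insert j T) - f T ≤ g j)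
    (O : Finset X) :
    f (S ∪ O) - f S ≤ ∑ j ∈ O \ S, g j := by
  induction O using Finset.induction_on with
  | empty => simp
  | insert a A haA ih =>
    by_cases haS : a ∈ S
    · rwa [union_insert, insert_eq_of_mem (mem_union_left A haS), insert_sdiff_of_mem A haS]
    · have ha_union : a ∉ S ∪ A := notMem_union.mpr ⟨haS, haA⟩
      have ha_sdiff : a ∉ A \ S := fun h => haA (mem_sdiff.mp h).1
      calc f (S ∪ insert a A) - f S
          = (f (insert a (S ∪ A)) - f (S ∪ A)) + (f (S ∪ A) - f S) := by
            rw [union_insert, sub_add_sub_cancel]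
        _ ≤ g a + ∑ j ∈ A \ S, g j :=
            add_le_add (hg (S ∪ A) a subset_union_left ha_union) ih
        _ = ∑ j ∈ insert a A \ S, g j := by
            rw [insert_sdiff_of_notMem A haS, sum_insert ha_sdiff]

theorem weak_submodular_union_bound_general {R : Type*} [DistribSMul R M]
    {f : Finset X → M} {c : R} {S : Finset X}
    (hcurv : ∀ T : Finset X, ∀ j : X, S ⊆ T → j ∉ T →
      f (insert j T) - f T ≤ c • (f (insert j S) - f S))
    (O : Finset X) :
    f (S ∪ O) - f S ≤ c • ∑ j ∈ O \ S, (f (insert j S) - f S) := by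
  rw [smul_sum]
  exact union_sub_le_sum_of_marginal_le hcurv O

end MarginalGain

/-- Let `X` be a finite set and `f` a monotone nondecreasing set function with `f(∅) = 0`
whose maximum element-wise curvature is at most `c` (with `c ≥ 1`). Then for every pair of
subsets `S, O ⊆ X`, `f(S ∪ O) − f(S) ≤ c · ∑_{j ∈ O \ S} (f(S ∪ {j}) − f(S))`. -/
theorem weak_submodular_union_bound {X : Type*} [Fintype X] [DecidableEq X]
    (f : Finset X → ℝ)
    (hmono : ∀ S T : Finset X, S ⊆ T → f S ≤ f T)
    (hempty : f ∅ = 0)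
    (c : ℝ) (hc : 1 ≤ c)
    (hcurv : ∀ S T : Finset X, ∀ j : X, S ⊆ T → j ∉ T →
      f (insert j T) - f T ≤ c * (f (insert j S) - f S))
    (S O : Finset X) :
    f (S ∪ O) - f S ≤ c * ∑ j ∈ O \ S, (f (insert j S) - f S) := by
  simp only [← smul_eq_mul] at hcurv ⊢
  exact weak_submodular_union_bound_general (hcurv S) O
end

section
/- Let k ≥ 1 with k ≤ |X| and let S_0 = ∅, S_{i+1} = S_i ∪ {j_i} for i = 0, …, k−1, where at each step j_i ∈ X \ S_i maximizes the marginal gain f(S_i ∪ {j}) − f(S_i) over j ∈ X \ S_i (the greedy algorithm). Then for every subset O ⊆ X with |O| ≤ k, f(S_k) ≥ (1 − (1 − 1/(c·k))^k) · f(O); in particular f(S_k) ≥ (1 − e^{−1/c}) · f(O). -/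
open Finset BigOperators

/-!
Adding the elements of `O` one at a time to the current set `A` and bounding each marginal by `c`
times the marginal at `A` gives `f O - f A ≤ c * ∑ j ∈ O, marginal f j A`. The greedy gain is at
least every summand, so one greedy step recovers a fraction at least `1 / (c * k)` of the gap
`f O - f A`. Hence the gap shrinks geometrically with ratio `1 - 1 / (c * k)`.
-/

theorem one_sub_pow_le_exp_neg_mul {x : ℝ} (hx : x ≤ 1) (n : ℕ) :
    (1 - x) ^ n ≤ Real.exp (-(n * x)) :=
  calc (1 - x) ^ n ≤ Real.exp (-x) ^ n :=
        pow_le_pow_left₀ (sub_nonneg.2 hx) (Real.one_sub_le_exp_neg x) n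
    _ = Real.exp (-(n * x)) := by rw [← Real.exp_nat_mul, mul_neg]

theorem one_div_mul_natCast_le_one {c : ℝ} {k : ℕ} (hc : 1 ≤ c) (hk : 1 ≤ k) :
    1 / (c * k) ≤ 1 := by
  have one_le_mul : 1 ≤ c * k := one_le_mul_of_one_le_of_one_le hc (mod_cast hk)
  exact (div_le_one (by positivity)).2 one_le_mul

section Greedy

variable {X : Type*} [DecidableEq X] {f : Finset X → ℝ} {c : ℝ} {k : ℕ} {A B O : Finset X}

/-- The marginal gain `f_j(S)` of adding `j` to `S`; it is `0` when `j ∈ S`. -/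
def marginal (f : Finset X → ℝ) (j : X) (S : Finset X) : ℝ :=
  f (insert j S) - f S

/-- The maximum element-wise curvature of `f` is at most `c`: enlarging a set multiplies the
marginal gain of a new element by at most `c`. The case `c = 1` is submodularity. -/
def HasCurvatureLE (f : Finset X → ℝ) (c : ℝ) : Prop :=
  ∀ S T : Finset X, ∀ j : X, S ⊆ T → j ∉ T → marginal f j T ≤ c * marginal f j S

/-- `B` is a possible result of one step of the greedy algorithm at `A`: it adds to `A` a new
element of maximal marginal gain. Ties may be broken in any way, so this is a relation. -/
def IsGreedyStep (f : Finset X → ℝ) (A B : Finset X) : Prop :=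
  ∃ j ∉ A, B = insert j A ∧ ∀ i ∉ A, marginal f i A ≤ marginal f j A

theorem marginal_of_mem {j : X} (hj : j ∈ A) : marginal f j A = 0 := by
  rw [marginal, insert_eq_of_mem hj, sub_self]

theorem HasCurvatureLE.sub_le_mul_sum_marginal (hf : HasCurvatureLE f c) (A P : Finset X) :
    f (A ∪ P) - f A ≤ c * ∑ j ∈ P, marginal f j A := by
  induction P using Finset.induction_on with
  | empty => simp
  | insert a P ha ih =>
    rw [sum_insert ha, union_insert]
    by_cases haA : a ∈ A
    · rwa [insert_eq_of_mem (mem_union_left P haA), marginal_of_mem haA, zero_add]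
    · have gain_a : f (insert a (A ∪ P)) - f (A ∪ P) ≤ c * marginal f a A :=
        hf A (A ∪ P) a subset_union_left (by simp [haA, ha])
      linarith

theorem IsGreedyStep.subset (h : IsGreedyStep f A B) : A ⊆ B := by
  obtain ⟨j, -, rfl, -⟩ := h
  exact subset_insert j A

theorem IsGreedyStep.marginal_le (h : IsGreedyStep f A B) (hf : Monotone f) (i : X) :
    marginal f i A ≤ f B - f A := by
  by_cases hi : i ∈ A
  · rw [marginal_of_mem hi]
    exact sub_nonneg.2 (hf h.subset)
  · obtain ⟨j, -, rfl, hmax⟩ := h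
    exact hmax i hi

theorem IsGreedyStep.sub_le_mul_sub (h : IsGreedyStep f A B) (hf : Monotone f)
    (hcurv : HasCurvatureLE f c) (hc : 0 ≤ c) (hO : #O ≤ k) :
    f O - f A ≤ c * k * (f B - f A) := by
  have gain_nonneg : 0 ≤ f B - f A := sub_nonneg.2 (hf h.subset)
  calc f O - f A ≤ f (A ∪ O) - f A := sub_le_sub_right (hf subset_union_right) _
    _ ≤ c * ∑ j ∈ O, marginal f j A := hcurv.sub_le_mul_sum_marginal A O
    _ ≤ c * (#O * (f B - f A)) := by
        gcongr
        simpa only [nsmul_eq_mul] using sum_le_card_nsmul O _ _ fun i _ => h.marginal_le hf i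
    _ ≤ c * (k * (f B - f A)) := by gcongr
    _ = c * k * (f B - f A) := (mul_assoc _ _ _).symm

theorem IsGreedyStep.gap_le (h : IsGreedyStep f A B) (hf : Monotone f)
    (hcurv : HasCurvatureLE f c) (hc : 0 < c) (hk : 0 < k) (hO : #O ≤ k) :
    f O - f B ≤ (1 - 1 / (c * k)) * (f O - f A) := by
  have recovered : 1 / (c * k) * (f O - f A) ≤ f B - f A := by
    rw [one_div_mul_eq_div, div_le_iff₀' (by positivity)]
    exact h.sub_le_mul_sub hf hcurv hc.le hO
  linarith

theorem greedy_gap_le (hf : Monotone f) (hcurv : HasCurvatureLE f c) (hc : 1 ≤ c) (hk : 1 ≤ k)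
    {S : ℕ → Finset X} {n : ℕ} (hS : ∀ i < n, IsGreedyStep f (S i) (S (i + 1))) (hO : #O ≤ k) :
    f O - f (S n) ≤ (1 - 1 / (c * k)) ^ n * (f O - f (S 0)) :=
  le_geom (u := fun i => f O - f (S i)) (sub_nonneg.2 (one_div_mul_natCast_le_one hc hk)) n
    fun i hi => (hS i hi).gap_le hf hcurv (by linarith) hk hO

theorem greedy_guarantee_general (hf : Monotone f) (hempty : f ∅ = 0) (hcurv : HasCurvatureLE f c)
    (hc : 1 ≤ c) (hk : 1 ≤ k) {S : ℕ → Finset X} {n : ℕ} (hS0 : S 0 = ∅)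
    (hS : ∀ i < n, IsGreedyStep f (S i) (S (i + 1))) (hO : #O ≤ k) :
    (1 - (1 - 1 / (c * k)) ^ n) * f O ≤ f (S n) ∧
    (1 - Real.exp (-(n * (1 / (c * k))))) * f O ≤ f (S n) := by
  have gap : f O - f (S n) ≤ (1 - 1 / (c * k)) ^ n * f O := by
    simpa only [hS0, hempty, sub_zero] using greedy_gap_le hf hcurv hc hk hS hO
  have value_nonneg : 0 ≤ f O := hempty.symm.trans_le (hf (empty_subset O))
  have ratio_pow_le := mul_le_mul_of_nonneg_right
    (one_sub_pow_le_exp_neg_mul (one_div_mul_natCast_le_one hc hk) n) value_nonneg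
  constructor <;> linarith

end Greedy

/-- Let `X` be a finite set and `f` a monotone nondecreasing set function with `f(∅) = 0`
whose maximum element-wise curvature is at most `c` (with `c ≥ 1`). Let `k ≥ 1` with
`k ≤ |X|` and let `S_0 = ∅`, `S_{i+1} = S_i ∪ {j_i}`, where at each step `j_i ∈ X \ S_i`
maximizes the marginal gain over `j ∈ X \ S_i` (the greedy algorithm). Then for every
subset `O ⊆ X` with `|O| ≤ k`, `f(S_k) ≥ (1 − (1 − 1/(c·k))^k)·f(O)`; in particular
`f(S_k) ≥ (1 − e^{−1/c})·f(O)`. -/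
theorem greedy_guarantee {X : Type*} [Fintype X] [DecidableEq X]
    (f : Finset X → ℝ)
    (hmono : ∀ S T : Finset X, S ⊆ T → f S ≤ f T)
    (hempty : f ∅ = 0)
    (c : ℝ) (hc : 1 ≤ c)
    (hcurv : ∀ S T : Finset X, ∀ j : X, S ⊆ T → j ∉ T →
      f (insert j T) - f T ≤ c * (f (insert j S) - f S))
    (k : ℕ) (hk : 1 ≤ k) (hkX : k ≤ Fintype.card X)
    (S : ℕ → Finset X) (jsel : ℕ → X)
    (hS0 : S 0 = ∅)
    (hstep : ∀ i < k, S (i + 1) = insert (jsel i) (S i))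
    (hnotmem : ∀ i < k, jsel i ∉ S i)
    (hgreedy : ∀ i < k, ∀ j, j ∉ S i →
      f (insert j (S i)) - f (S i) ≤ f (insert (jsel i) (S i)) - f (S i))
    (O : Finset X) (hO : O.card ≤ k) :
    (1 - (1 - 1 / (c * k)) ^ k) * f O ≤ f (S k) ∧
    (1 - Real.exp (-(1 / c))) * f O ≤ f (S k) := by
  have exponent : (k : ℝ) * (1 / (c * k)) = 1 / c := by field_simp
  simpa only [exponent] using greedy_guarantee_general hmono hempty hcurv hc hk hS0
    (fun i hi => ⟨jsel i, hnotmem i hi, hstep i hi, hgreedy i hi⟩) hO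
end

section
/- Let n, k, s be natural numbers with 0 < n, k ≤ n, and s ≤ n. Then (C(n−k, s) : ℝ) ≤ (1 − k/n)^s · C(n, s), where C(·,·) denotes the binomial coefficient. Equivalently, the probability that a uniformly random s-element subset of an n-element set, drawn without replacement, contains no element of a fixed k-element subset is at most (1 − k/n)^s. -/
/-!
Drawing `s` elements of an `n`-set one at a time without replacement, the draw after `i` elements of
a fixed `m`-subset lands in that subset with probability `(m - i) / (n - i) ≤ m / n`. Multiplying
these `s` bounds gives `m.choose s / n.choose s ≤ (m / n) ^ s`; the theorem is the case `m = n - k`.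
-/

theorem mul_sub_le_mul_sub_of_le {m n : ℕ} (hmn : m ≤ n) (i : ℕ) :
    n * (m - i) ≤ m * (n - i) := by
  rw [Nat.mul_sub, Nat.mul_sub, Nat.mul_comm n m]
  exact Nat.sub_le_sub_left (Nat.mul_le_mul_right i hmn) _

theorem pow_mul_descFactorial_le_pow_mul_descFactorial {m n : ℕ} (hmn : m ≤ n) (s : ℕ) :
    n ^ s * m.descFactorial s ≤ m ^ s * n.descFactorial s := by
  induction s with
  | zero => simp
  | succ s ih =>
    calc n ^ (s + 1) * m.descFactorial (s + 1)
        = (n * (m - s)) * (n ^ s * m.descFactorial s) := by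
          rw [Nat.descFactorial_succ]; ring
      _ ≤ (m * (n - s)) * (m ^ s * n.descFactorial s) :=
          Nat.mul_le_mul (mul_sub_le_mul_sub_of_le hmn s) ih
      _ = m ^ (s + 1) * n.descFactorial (s + 1) := by
          rw [Nat.descFactorial_succ]; ring

theorem pow_mul_choose_le_pow_mul_choose {m n : ℕ} (hmn : m ≤ n) (s : ℕ) :
    n ^ s * m.choose s ≤ m ^ s * n.choose s := by
  refine Nat.le_of_mul_le_mul_left ?_ s.factorial_pos
  simpa only [Nat.descFactorial_eq_factorial_mul_choose, Nat.mul_left_comm] using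
    pow_mul_descFactorial_le_pow_mul_descFactorial hmn s

/-- Let `n, k, s` be natural numbers with `0 < n`, `k ≤ n`, and `s ≤ n`. Then
`C(n−k, s) ≤ (1 − k/n)^s · C(n, s)`. Equivalently, the probability that a uniformly random
`s`-element subset of an `n`-element set contains no element of a fixed `k`-element subset
is at most `(1 − k/n)^s`. -/
theorem choose_sub_le_pow_mul_choose (n k s : ℕ) (hn : 0 < n) (hk : k ≤ n) (hs : s ≤ n) :
    ((n - k).choose s : ℝ) ≤ (1 - (k : ℝ) / n) ^ s * (n.choose s : ℝ) := by
  have hn_pos : (0 : ℝ) < n := Nat.cast_pos.mpr hn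
  have ratio_eq : 1 - (k : ℝ) / n = ((n - k : ℕ) : ℝ) / n := by
    rw [Nat.cast_sub hk, sub_div, div_self hn_pos.ne']
  rw [ratio_eq, div_pow, div_mul_eq_mul_div, le_div_iff₀' (pow_pos hn_pos s)]
  exact_mod_cast pow_mul_choose_le_pow_mul_choose (Nat.sub_le n k) s
end
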